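/- Central-charge part of the coincidences C_{psi,1B}(n,m) ≅ W_s(osp_{1|2r})^{Z_2} (Appendix D, type 1B): for all integers m, n ≥ 0 and r ≥ 1, the identity c1B(n,m,psi) = cosp(r,t) holds in each of the following three cases, whenever psi is not 0 or 1, t is not 0 or 1/2, and all displayed denominators are nonzero: (1) psi = (1+2*m+2*n+2*r)/(1+2*m), t = (n+r)/(1+2*m+2*n+2*r); (2) psi = (1+2*m+2*n)/(1+2*m+2*r), t = (r-n)/(1+2*m+2*r); (3) psi = (1+2*m+2*n-2*r)/(1+2*m-2*r), t = (2*r-2*m-2*n-1)/(2*(2*r-2*m-1)). -/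

import Mathlib

/-!
Put `ε = (2m + 1)(ψ - 1) - 2n` and `(h₁, h₂, h₃) = (1, -ψ, ψ - 1)`, so that `h₁ + h₂ + h₃ = 0`.
Then `c1B n m ψ = ½ ∏ (1 + ε / hᵢ)`, which is symmetric in the `hᵢ` and invariant under a common
rescaling of `ε` and the `hᵢ`. The charge `cosp r t` is the same product at `ψ = 2t`, `ε = 2r h₃`.
The three cases are the curves `ε = 2r hᵢ` for `i = 1, 2, 3`; permuting and rescaling the `hᵢ` so
that `hᵢ` comes last and the first entry is `1` replaces `ψ` by `1 - ψ⁻¹`, `1 - ψ` and `ψ`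
respectively, and this is `2t`.
-/

noncomputable def c1B (n m psi : ℝ) : ℝ :=
  -((psi + m * psi - m - n - 1) * (2 * m * psi - 2 * m - 2 * n - 1) * (psi + 2 * m * psi - 2 * m - 2 * n)) / ((psi - 1) * psi)

noncomputable def cosp (r t : ℝ) : ℝ :=
  -(((2 * r - 1) * t - r) * (4 * r * t - 2 * r + 1) * ((4 * r + 2) * t - 2 * r - 1)) / (2 * t * (2 * t - 1))

section TrialityCharge

variable {K : Type*} [Field K]

/-- The product `½ ∏ (1 + ε / hᵢ)`, the common form of the central charges `c1B` and `cosp`. It is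
written over the common denominator `2 h₁ h₂ h₃`, hence is `0` when some `hᵢ` vanishes. -/
def trialityCharge (h₁ h₂ h₃ ε : K) : K :=
  (ε + h₁) * (ε + h₂) * (ε + h₃) / (2 * h₁ * h₂ * h₃)

theorem trialityCharge_rotate (h₁ h₂ h₃ ε : K) :
    trialityCharge h₁ h₂ h₃ ε = trialityCharge h₂ h₃ h₁ ε := by
  unfold trialityCharge
  congr 1 <;> ring

theorem trialityCharge_right_comm (h₁ h₂ h₃ ε : K) :
    trialityCharge h₁ h₂ h₃ ε = trialityCharge h₁ h₃ h₂ ε := by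
  unfold trialityCharge
  congr 1 <;> ring

theorem trialityCharge_mul_left {a : K} (ha : a ≠ 0) (h₁ h₂ h₃ ε : K) :
    trialityCharge (a * h₁) (a * h₂) (a * h₃) (a * ε) = trialityCharge h₁ h₂ h₃ ε := by
  unfold trialityCharge
  rw [← mul_div_mul_left _ (2 * h₁ * h₂ * h₃) (pow_ne_zero 3 ha)]
  congr 1 <;> ring

end TrialityCharge

theorem c1B_eq_trialityCharge (n m psi : ℝ) :
    c1B n m psi = trialityCharge 1 (-psi) (psi - 1) ((2 * m + 1) * (psi - 1) - 2 * n) := by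
  unfold c1B trialityCharge
  rw [← mul_div_mul_left _ ((psi - 1) * psi) (show (-2 : ℝ) ≠ 0 by norm_num)]
  congr 1 <;> ring

theorem cosp_eq_trialityCharge (r t : ℝ) :
    cosp r t = trialityCharge 1 (-(2 * t)) (2 * t - 1) (2 * r * (2 * t - 1)) := by
  unfold cosp trialityCharge
  rw [← mul_div_mul_left _ (2 * t * (2 * t - 1)) (show (-2 : ℝ) ≠ 0 by norm_num)]
  congr 1 <;> ring

section Coincidences

variable {n m r psi : ℝ}

theorem c1B_eq_cosp_of_eq_two_mul (hpsi : psi ≠ 0)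
    (h : (2 * m + 1) * (psi - 1) - 2 * n = 2 * r) :
    c1B n m psi = cosp r ((1 - psi⁻¹) / 2) :=
  calc c1B n m psi
    _ = trialityCharge 1 (-psi) (psi - 1) (2 * r) := by rw [c1B_eq_trialityCharge, h]
    _ = trialityCharge (-psi) (psi - 1) 1 (2 * r) := trialityCharge_rotate ..
    _ = trialityCharge (-psi⁻¹ * -psi) (-psi⁻¹ * (psi - 1)) (-psi⁻¹ * 1) (-psi⁻¹ * (2 * r)) :=
      (trialityCharge_mul_left (neg_ne_zero.mpr (inv_ne_zero hpsi)) ..).symm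
    _ = cosp r ((1 - psi⁻¹) / 2) := by
      rw [cosp_eq_trialityCharge]
      congr 1 <;> field_simp <;> ring

theorem c1B_eq_cosp_of_eq_two_mul_neg
    (h : (2 * m + 1) * (psi - 1) - 2 * n = 2 * r * -psi) :
    c1B n m psi = cosp r ((1 - psi) / 2) :=
  calc c1B n m psi
    _ = trialityCharge 1 (-psi) (psi - 1) (2 * r * -psi) := by rw [c1B_eq_trialityCharge, h]
    _ = trialityCharge 1 (psi - 1) (-psi) (2 * r * -psi) := trialityCharge_right_comm ..
    _ = cosp r ((1 - psi) / 2) := by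
      rw [cosp_eq_trialityCharge]
      congr 1 <;> ring

theorem c1B_eq_cosp_of_eq_two_mul_sub_one
    (h : (2 * m + 1) * (psi - 1) - 2 * n = 2 * r * (psi - 1)) :
    c1B n m psi = cosp r (psi / 2) := by
  rw [c1B_eq_trialityCharge, h, cosp_eq_trialityCharge, mul_div_cancel₀ psi two_ne_zero]

end Coincidences

theorem stmt16_general (n m r : ℝ) :
    (∀ psi t : ℝ,
      psi = (1 + 2 * m + 2 * n + 2 * r) / (1 + 2 * m) →
      t = (n + r) / (1 + 2 * m + 2 * n + 2 * r) →
      1 + 2 * m ≠ 0 →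
      psi ≠ 0 →
      psi ≠ 1 →
      c1B n m psi = cosp r t) ∧
    (∀ psi t : ℝ,
      psi = (1 + 2 * m + 2 * n) / (1 + 2 * m + 2 * r) →
      t = (r - n) / (1 + 2 * m + 2 * r) →
      1 + 2 * m + 2 * r ≠ 0 →
      psi ≠ 0 →
      psi ≠ 1 →
      c1B n m psi = cosp r t) ∧
    (∀ psi t : ℝ,
      psi = (1 + 2 * m + 2 * n - 2 * r) / (1 + 2 * m - 2 * r) →
      t = (2 * r - 2 * m - 2 * n - 1) / (2 * (2 * r - 2 * m - 1)) →
      1 + 2 * m - 2 * r ≠ 0 →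
      psi ≠ 0 →
      psi ≠ 1 →
      c1B n m psi = cosp r t) := by
  refine ⟨?_, ?_, ?_⟩
  · intro psi t hpsi ht hD hpsi0 _
    have hN : 1 + 2 * m + 2 * n + 2 * r ≠ 0 := (div_ne_zero_iff.mp (hpsi ▸ hpsi0)).1
    have ht' : t = (1 - psi⁻¹) / 2 := by
      rw [ht, hpsi, inv_div, one_sub_div hN, div_div,
        div_eq_div_iff hN (mul_ne_zero hN two_ne_zero)]
      ring
    rw [ht']
    exact c1B_eq_cosp_of_eq_two_mul hpsi0 (by rw [hpsi]; field_simp; ring)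
  · intro psi t hpsi ht hD _ _
    have ht' : t = (1 - psi) / 2 := by
      rw [ht, hpsi, one_sub_div hD, div_div, div_eq_div_iff hD (mul_ne_zero hD two_ne_zero)]
      ring
    rw [ht']
    exact c1B_eq_cosp_of_eq_two_mul_neg (by rw [hpsi]; field_simp; ring)
  · intro psi t hpsi ht hD _ _
    have hD' : 2 * (2 * r - 2 * m - 1) ≠ 0 := fun h => hD (by linarith)
    have ht' : t = psi / 2 := by
      rw [ht, hpsi, div_div, div_eq_div_iff hD' (mul_ne_zero hD two_ne_zero)]
      ring
    rw [ht']
    exact c1B_eq_cosp_of_eq_two_mul_sub_one (by rw [hpsi]; field_simp; ring)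

theorem stmt16 (n m r : ℤ) (hn : 0 ≤ n) (hm : 0 ≤ m) (hr : 1 ≤ r) :
    (∀ psi t : ℝ,
      psi = (1 + 2 * (m : ℝ) + 2 * (n : ℝ) + 2 * (r : ℝ)) / (1 + 2 * (m : ℝ)) →
      t = ((n : ℝ) + (r : ℝ)) / (1 + 2 * (m : ℝ) + 2 * (n : ℝ) + 2 * (r : ℝ)) →
      (1 + 2 * (m : ℝ)) ≠ 0 →
      (1 + 2 * (m : ℝ) + 2 * (n : ℝ) + 2 * (r : ℝ)) ≠ 0 →
      psi ≠ 0 →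
      psi ≠ 1 →
      t ≠ 0 →
      t ≠ 1 / 2 →
      c1B (n : ℝ) (m : ℝ) psi = cosp (r : ℝ) t) ∧
    (∀ psi t : ℝ,
      psi = (1 + 2 * (m : ℝ) + 2 * (n : ℝ)) / (1 + 2 * (m : ℝ) + 2 * (r : ℝ)) →
      t = ((r : ℝ) - (n : ℝ)) / (1 + 2 * (m : ℝ) + 2 * (r : ℝ)) →
      (1 + 2 * (m : ℝ) + 2 * (r : ℝ)) ≠ 0 →
      psi ≠ 0 →
      psi ≠ 1 →
      t ≠ 0 →
      t ≠ 1 / 2 →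
      c1B (n : ℝ) (m : ℝ) psi = cosp (r : ℝ) t) ∧
    (∀ psi t : ℝ,
      psi = (1 + 2 * (m : ℝ) + 2 * (n : ℝ) - 2 * (r : ℝ)) / (1 + 2 * (m : ℝ) - 2 * (r : ℝ)) →
      t = (2 * (r : ℝ) - 2 * (m : ℝ) - 2 * (n : ℝ) - 1) / (2 * (2 * (r : ℝ) - 2 * (m : ℝ) - 1)) →
      (1 + 2 * (m : ℝ) - 2 * (r : ℝ)) ≠ 0 →
      (2 * (2 * (r : ℝ) - 2 * (m : ℝ) - 1)) ≠ 0 →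
      psi ≠ 0 →
      psi ≠ 1 →
      t ≠ 0 →
      t ≠ 1 / 2 →
      c1B (n : ℝ) (m : ℝ) psi = cosp (r : ℝ) t) := by
  obtain ⟨h₁, h₂, h₃⟩ := stmt16_general n m r
  exact ⟨fun psi t hpsi ht hD _ h0 h1 _ _ => h₁ psi t hpsi ht hD h0 h1,
    fun psi t hpsi ht hD h0 h1 _ _ => h₂ psi t hpsi ht hD h0 h1,
    fun psi t hpsi ht hD _ h0 h1 _ _ => h₃ psi t hpsi ht hD h0 h1⟩
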